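/- Let C be a category with finite products and X a projection-coextensive object of C. Let (π₁ : X → A, π₂ : X → A') and (π₁' : X → B, π₂' : X → B') be two binary product diagrams for X. If π₁' factors through π₁ (i.e., there exists u : A → B with u∘π₁ = π₁'), then π₂ factors through π₂' (i.e., there exists v : B' → A' with v∘π₂' = π₂). In other words, complementation of product projections is order-reversing. -/

import Mathlib

open CategoryTheory CategoryTheory.Limits

universe v u

variable {C : Type u} [Category.{v} C]

/-- `(p, q)` is a binary product diagram, exhibiting `X` as the product of `A` and `B`. -/
def IsBinaryProduct {X A B : C} (p : X ⟶ A) (q : X ⟶ B) : Prop :=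
  Nonempty (IsLimit (BinaryFan.mk p q))

/-- `p : X ⟶ A` is a product projection. -/
def IsProductProjection {X A : C} (p : X ⟶ A) : Prop :=
  ∃ (B : C) (q : X ⟶ B), IsBinaryProduct p q

/-- A pushout square whose two legs belong to the class `M`. -/
def IsMPushout (M : MorphismProperty C) {Z A B P : C}
    (f : Z ⟶ A) (g : Z ⟶ B) (a : A ⟶ P) (b : B ⟶ P) : Prop :=
  IsPushout f g a b ∧ M a ∧ M b

/-- `X` is an `M`-coextensive object. -/
structure MCoextensive (M : MorphismProperty C) (X : C) : Prop where
  pushout_exists : ∀ ⦃Y A : C⦄ (m : X ⟶ Y) (p : X ⟶ A), M m → IsProductProjection p →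
    ∃ (P : C) (a : A ⟶ P) (b : Y ⟶ P), IsMPushout M p m a b
  isBinaryProduct_iff : ∀ ⦃A₁ A₂ Y B₁ B₂ : C⦄ (π₁ : X ⟶ A₁) (π₂ : X ⟶ A₂)
    (f : X ⟶ Y) (p₁ : A₁ ⟶ B₁) (p₂ : A₂ ⟶ B₂) (π₁' : Y ⟶ B₁) (π₂' : Y ⟶ B₂),
    IsBinaryProduct π₁ π₂ → M f → M p₁ → M p₂ →
    π₁ ≫ p₁ = f ≫ π₁' → π₂ ≫ p₂ = f ≫ π₂' →
    (IsBinaryProduct π₁' π₂' ↔ (IsMPushout M π₁ f p₁ π₁' ∧ IsMPushout M π₂ f p₂ π₂'))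

/-- The class of product projections. -/
def projections (C : Type u) [Category.{v} C] : MorphismProperty C :=
  fun _ _ f => IsProductProjection f

/-- `X` is projection-coextensive. -/
def ProjectionCoextensive (X : C) : Prop := MCoextensive (projections C) X

/-- `f` is a regular epimorphism (a coequalizer of some parallel pair). -/
def IsRegularEpimorphism {X Y : C} (f : X ⟶ Y) : Prop :=
  ∃ (W : C) (a b : W ⟶ X) (h : a ≫ f = b ≫ f), Nonempty (IsColimit (Cofork.ofπ f h))

/-- The class of regular epimorphisms. -/
def regularEpis (C : Type u) [Category.{v} C] : MorphismProperty C :=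
  fun _ _ f => IsRegularEpimorphism f

/-- `X` is regularly-coextensive. -/
def RegularlyCoextensive (X : C) : Prop := MCoextensive (regularEpis C) X

/-- A regular category: finitely complete, coequalizers of kernel pairs, and
regular epimorphisms are stable under pullback. -/
class IsRegularCategory (C : Type u) [Category.{v} C] [HasFiniteLimits C] : Prop where
  hasCoequalizer_kernelPair : ∀ {X Y : C} (f : X ⟶ Y),
    HasCoequalizer (pullback.fst f f) (pullback.snd f f)
  regularEpi_stable : ∀ {X Y Z : C} (f : X ⟶ Y) (g : Z ⟶ Y),
    IsRegularEpimorphism f → IsRegularEpimorphism (pullback.snd f g)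

/-- `X` has global support: the unique morphism to the terminal object is a regular epi. -/
def HasGlobalSupport [HasTerminal C] (X : C) : Prop :=
  IsRegularEpimorphism (terminal.from X)

/-!
Pushing the product diagram `(π₁', π₂')` out along `π₂ : X ⟶ A'` presents `A'` as a product
`P₁ × P₂`. The pushout of the complementary projections `π₁`, `π₂` is terminal, and `π₁'` factors
through `π₁`, so the projection `A' ⟶ P₁` factors through the terminal object. The other projection
`A' ⟶ P₂` is then invertible, and its inverse turns the pushout leg `B' ⟶ P₂` into the
factorization of `π₂` through `π₂'`.
-/

namespace IsBinaryProduct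

variable {X A B : C} {p : X ⟶ A} {q : X ⟶ B}

theorem symm (h : IsBinaryProduct p q) : IsBinaryProduct q p :=
  h.map BinaryFan.isLimitFlip

theorem isProductProjection_fst (h : IsBinaryProduct p q) : IsProductProjection p :=
  ⟨B, q, h⟩

theorem isProductProjection_snd (h : IsBinaryProduct p q) : IsProductProjection q :=
  h.symm.isProductProjection_fst

theorem isIso_snd_of_terminal_from_comp_eq_fst [HasTerminal C] (h : IsBinaryProduct p q)
    (t : ⊤_ C ⟶ A) (ht : terminal.from X ≫ t = p) : IsIso q := by
  obtain ⟨hpq⟩ := h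
  obtain ⟨s, hsp : s ≫ p = terminal.from B ≫ t, hsq : s ≫ q = 𝟙 B⟩ :=
    BinaryFan.IsLimit.lift' hpq (terminal.from B ≫ t) (𝟙 B)
  refine ⟨s, BinaryFan.IsLimit.hom_ext hpq ?_ ?_, hsq⟩
  · calc
      (q ≫ s) ≫ p = (q ≫ terminal.from B) ≫ t := by simp only [Category.assoc, hsp]
      _ = terminal.from X ≫ t := by rw [terminal.comp_from]
      _ = 𝟙 X ≫ p := by rw [ht, Category.id_comp]
  · calc
      (q ≫ s) ≫ q = q := by rw [Category.assoc, hsq, Category.comp_id]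
      _ = 𝟙 X ≫ q := (Category.id_comp q).symm

end IsBinaryProduct

theorem isBinaryProduct_id_terminal_from [HasTerminal C] (X : C) :
    IsBinaryProduct (𝟙 X) (terminal.from X) :=
  (BinaryFan.isLimit_iff_isIso_fst terminalIsTerminal _).2 (inferInstanceAs (IsIso (𝟙 X)))

namespace MCoextensive

variable {M : MorphismProperty C} {X : C}

theorem exists_pushout_isBinaryProduct (hX : MCoextensive M X) {A B Y : C} {p : X ⟶ A} {q : X ⟶ B}
    (hpq : IsBinaryProduct p q) (f : X ⟶ Y) (hf : M f) :
    ∃ (P Q : C) (a : A ⟶ P) (b : B ⟶ Q) (p' : Y ⟶ P) (q' : Y ⟶ Q),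
      IsPushout p f a p' ∧ IsPushout q f b q' ∧ IsBinaryProduct p' q' := by
  obtain ⟨P, a, p', hP⟩ := hX.pushout_exists f p hf hpq.isProductProjection_fst
  obtain ⟨Q, b, q', hQ⟩ := hX.pushout_exists f q hf hpq.isProductProjection_snd
  exact ⟨P, Q, a, b, p', q', hP.1, hQ.1,
    (hX.isBinaryProduct_iff p q f a b p' q' hpq hf hP.2.1 hQ.2.1 hP.1.w hQ.1.w).2 ⟨hP, hQ⟩⟩

theorem isPushout_terminal [HasTerminal C] (hX : MCoextensive M X) (hM : projections C ≤ M)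
    {A B : C} {p : X ⟶ A} {q : X ⟶ B} (hpq : IsBinaryProduct p q) :
    IsPushout p q (terminal.from A) (terminal.from B) := by
  have hA : IsBinaryProduct (𝟙 A) (terminal.from A) := isBinaryProduct_id_terminal_from A
  have hB : IsBinaryProduct (𝟙 B) (terminal.from B) := isBinaryProduct_id_terminal_from B
  -- Coextensivity along `p`, with the product diagram `(𝟙 A, terminal.from A)` under `(p, q)`.
  have squares := (hX.isBinaryProduct_iff p q p (𝟙 A) (terminal.from B) (𝟙 A) (terminal.from A) hpq
    (hM p hpq.isProductProjection_fst) (hM _ hA.isProductProjection_fst)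
    (hM _ hB.isProductProjection_snd) rfl (Subsingleton.elim _ _)).1 hA
  exact squares.2.1.flip

end MCoextensive

theorem projectionCoextensive_complement_orderReversing_general [HasTerminal C]
    {M : MorphismProperty C} (hM : projections C ≤ M) {X : C} (hX : MCoextensive M X)
    {A A' B B' : C} {π₁ : X ⟶ A} {π₂ : X ⟶ A'} {π₁' : X ⟶ B} {π₂' : X ⟶ B'}
    (h₁ : IsBinaryProduct π₁ π₂) (h₂ : IsBinaryProduct π₁' π₂')
    (u : A ⟶ B) (hu : π₁ ≫ u = π₁') :
    ∃ v : B' ⟶ A', π₂' ≫ v = π₂ := by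
  obtain ⟨P₁, P₂, a₁, a₂, r₁, r₂, hP₁, hP₂, hr⟩ :=
    hX.exists_pushout_isBinaryProduct h₂ π₂ (hM π₂ h₁.isProductProjection_snd)
  obtain ⟨t, -, ht : terminal.from A' ≫ t = r₁⟩ :=
    (hX.isPushout_terminal hM h₁).exists_desc (u ≫ a₁) r₁ (by rw [reassoc_of% hu, hP₁.w])
  have : IsIso r₂ := hr.isIso_snd_of_terminal_from_comp_eq_fst t ht
  exact ⟨a₂ ≫ inv r₂, by rw [hP₂.w_assoc, IsIso.hom_inv_id, Category.comp_id]⟩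

/-- Complementation of product projections of a projection-coextensive object is
order-reversing. -/
theorem projectionCoextensive_complement_orderReversing
    {C : Type u} [Category.{v} C] [HasFiniteProducts C]
    (X : C) (hX : ProjectionCoextensive X)
    {A A' B B' : C} (π₁ : X ⟶ A) (π₂ : X ⟶ A') (π₁' : X ⟶ B) (π₂' : X ⟶ B')
    (h₁ : IsBinaryProduct π₁ π₂) (h₂ : IsBinaryProduct π₁' π₂')
    (u : A ⟶ B) (hu : π₁ ≫ u = π₁') :
    ∃ v : B' ⟶ A', π₂' ≫ v = π₂ :=
  projectionCoextensive_complement_orderReversing_general le_rfl hX h₁ h₂ u hu
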